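/- Let T be an almost steep rank-one transformation. Then T is doubly ergodic for levels: for every pair of levels A and B (of any columns of T) there exists a positive integer n with μ(A ∩ T^n A) > 0 and μ(B ∩ T^n A) > 0. -/

import Mathlib

open MeasureTheory Filter Set Pointwise

/-- A rank-one cutting-and-stacking transformation of a subset `X ⊆ ℝ` (with Lebesgue
measure), given by columns `C n` consisting of `h n` levels (open intervals) of width `w n`,
with `pos n j` the left endpoint of the level of height `j` in column `C n`; column `C (n+1)`
is obtained from `C n` by cutting into `r n ≥ 2` subcolumns of equal width, adding `s n k`
spacers above the `k`-th subcolumn, and stacking. -/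
structure RankOne where
  X : Set ℝ
  T : ℝ ≃ᵐ ℝ
  r : ℕ → ℕ
  s : ℕ → ℕ → ℕ
  h : ℕ → ℕ
  w : ℕ → ℝ
  pos : ℕ → ℕ → ℝ
  hr : ∀ n, 2 ≤ r n
  h0 : h 0 = 1
  w0 : w 0 = 1
  pos0 : pos 0 0 = 0
  hrec : ∀ n, h (n + 1) = ∑ k ∈ Finset.range (r n), (h n + s n k)
  wrec : ∀ n, w (n + 1) = w n / (r n : ℝ)
  hX : X = ⋃ n, ⋃ j < h n, Set.Ioo (pos n j) (pos n j + w n)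
  disj : ∀ n, ∀ j < h n, ∀ j' < h n, j ≠ j' →
    Disjoint (Set.Ioo (pos n j) (pos n j + w n)) (Set.Ioo (pos n j') (pos n j' + w n))
  stack : ∀ n, ∀ j < h n, ∀ k < r n,
    pos (n + 1) ((∑ i ∈ Finset.range k, (h n + s n i)) + j) = pos n j + (k : ℝ) * w (n + 1)
  Tmap : ∀ n j, j + 1 < h n → ∀ x ∈ Set.Ioo (pos n j) (pos n j + w n),
    T x = x + (pos n (j + 1) - pos n j)
  Tbij : Set.BijOn (⇑T) X X
  Tpres : MeasurePreserving (⇑T) (volume.restrict X) (volume.restrict X)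

namespace RankOne

/-- The level of height `j` in column `C n`. -/
def lvl (S : RankOne) (n j : ℕ) : Set ℝ := Set.Ioo (S.pos n j) (S.pos n j + S.w n)

/-- The measure on the space: Lebesgue measure restricted to `X`. -/
noncomputable def μ (S : RankOne) : Measure ℝ := volume.restrict S.X

/-- The intrinsic weight sequence `u n F = μ(F ∩ TⁿF) / μ(F)²`. -/
noncomputable def u (S : RankOne) (F : Set ℝ) (n : ℕ) : ℝ :=
  (S.μ (F ∩ (⇑S.T)^[n] '' F)).toReal / (S.μ F).toReal ^ 2

/-- `a n F = ∑_{k<n} u k F`. -/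
noncomputable def a (S : RankOne) (F : Set ℝ) (n : ℕ) : ℝ :=
  ∑ k ∈ Finset.range n, S.u F k

/-- `T` is normal if spacers are added above the rightmost subcolumn infinitely often. -/
def Normal (S : RankOne) : Prop := ∀ m, ∃ n, m ≤ n ∧ 0 < S.s n (S.r n - 1)

/-- `T` grows exponentially: `2 s_{n, r_n - 1} ≥ h_{n+1}` for every `n`. -/
def ExpGrowing (S : RankOne) : Prop := ∀ n, S.h (n + 1) ≤ 2 * S.s n (S.r n - 1)

/-- `T` has a bounded number of cuts: `sup r_n < ∞`. -/
def BoundedCuts (S : RankOne) : Prop := ∃ c, ∀ n, S.r n ≤ c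

/-- `H n = {0} ∪ {∑_{k≤i} (h n + s n k) : 0 ≤ i < r n - 1}`. -/
def Hset (S : RankOne) (n : ℕ) : Finset ℕ :=
  insert 0 ((Finset.range (S.r n - 1)).image fun i => ∑ k ∈ Finset.range (i + 1), (S.h n + S.s n k))

/-- The set of heights in column `C N` of the descendants of the level of height `p`
in column `C j`: `D(J, N) = p + H j ⊕ H (j+1) ⊕ ⋯ ⊕ H (N-1)`. -/
def desc (S : RankOne) (j p : ℕ) : ℕ → Finset ℕ
  | 0 => {p}
  | N + 1 => if N < j then {p} else desc S j p N + S.Hset N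

/-- `M m`: the maximal height of a descendant of the unit interval `I` in column `C m`. -/
def M (S : RankOne) (m : ℕ) : ℕ := (S.desc 0 0 m).sup id

/-- The ergodic sum `S_n(1_F)(x) = ∑_{k<n} 1_F(T^k x)`. -/
noncomputable def birkhoff (S : RankOne) (F : Set ℝ) (n : ℕ) (x : ℝ) : ℝ :=
  ∑ k ∈ Finset.range n, Set.indicator F (fun _ => (1 : ℝ)) ((⇑S.T)^[k] x)

/-- `T` is rationally weakly mixing on `F`. -/
def RWMOn (S : RankOne) (F : Set ℝ) : Prop :=
  MeasurableSet F ∧ 0 < S.μ F ∧ S.μ F ≠ ⊤ ∧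
  ∀ A B : Set ℝ, MeasurableSet A → A ⊆ F → MeasurableSet B → B ⊆ F →
    Tendsto (fun n => (S.a F n)⁻¹ *
      ∑ k ∈ Finset.range n,
        |(S.μ (A ∩ (⇑S.T)^[k] '' B)).toReal - (S.μ A).toReal * (S.μ B).toReal * S.u F k|)
      atTop (nhds 0)

/-- `T` is rationally weakly mixing. -/
def RWM (S : RankOne) : Prop := ∃ F, S.RWMOn F

/-- `T` is rationally ergodic: some set `F` of positive finite measure satisfies a
Renyi inequality. -/
def RatErgodic (S : RankOne) : Prop :=
  ∃ (F : Set ℝ) (c : ℝ), MeasurableSet F ∧ 0 < S.μ F ∧ S.μ F ≠ ⊤ ∧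
    ∀ n, ∫ x in F, (S.birkhoff F n x) ^ 2 ∂S.μ ≤ c * (∫ x in F, S.birkhoff F n x ∂S.μ) ^ 2

/-- `T` is spectrally weakly mixing: every bounded measurable eigenfunction is a.e. constant. -/
def SpecWM (S : RankOne) : Prop :=
  ∀ (f : ℝ → ℂ) (z : ℂ), Measurable f → (∃ C, ∀ᵐ x ∂S.μ, ‖f x‖ ≤ C) →
    (∀ᵐ x ∂S.μ, f (S.T x) = z * f x) → ∃ c : ℂ, ∀ᵐ x ∂S.μ, f x = c

/-- `T` is zero-type: `μ(A ∩ TⁿA) → 0` for all `A` of finite measure. -/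
def ZeroType (S : RankOne) : Prop :=
  ∀ A : Set ℝ, MeasurableSet A → S.μ A ≠ ⊤ →
    Tendsto (fun n => S.μ (A ∩ (⇑S.T)^[n] '' A)) atTop (nhds 0)

/-- The `i`-th nonzero element of `H n` (for `i < r n - 1`): `e n i = ∑_{k ≤ i} (h n + s n k)`. -/
def e (S : RankOne) (n i : ℕ) : ℕ := ∑ k ∈ Finset.range (i + 1), (S.h n + S.s n k)

/-- `T` is steep: listing the nonzero elements of `H 0`, then `H 1`, etc., as `t 1, t 2, …`,
each successive element is at least `4` times the previous one. -/
def Steep (S : RankOne) : Prop :=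
  (∀ n i, i + 2 < S.r n → 4 * S.e n i ≤ S.e n (i + 1)) ∧
  (∀ n, 4 * S.e n (S.r n - 2) ≤ S.e (n + 1) 0)

/-- `T` is almost steep. -/
def AlmostSteep (S : RankOne) : Prop :=
  ∀ n, 3 ≤ S.r n ∧ S.s n 0 = 0 ∧ S.s n 1 = 1 ∧
    ∀ i, 2 ≤ i → i ≤ S.r n - 1 →
      4 * (∑ k ∈ Finset.range i, (S.h n + S.s n k)) ≤ ∑ k ∈ Finset.range (i + 1), (S.h n + S.s n k)

/-- `A` is a finite union of levels of `T`. -/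
def FinUnionLevels (S : RankOne) (A : Set ℝ) : Prop :=
  ∃ q : Finset (ℕ × ℕ), (∀ v ∈ q, v.2 < S.h v.1) ∧ A = ⋃ v ∈ q, S.lvl v.1 v.2

end RankOne

/-!
Call an integer `δ` visible in `C n` from `A` to `B` if `B` contains a level of `C n` lying `δ`
above a level contained in `A`. A nonnegative visible `δ` yields `μ(B ∩ T^δ A) > 0`. Passing to
`C (n + 1)`, one may add to `δ` the distance between the bases of any two subcolumns of `C n`. If
two consecutive such distances are `g` and `g + 1`, then adding `g` to one visible integer and
`g + 1` to another changes their difference by one. Repeating this makes two given visible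
integers equal, and adding the distance between the first two subcolumns then makes the common
value positive.
-/

namespace RankOne

variable {S : RankOne} {A B A' B' : Set ℝ} {n N j k m : ℕ} {δ δ' : ℤ}

theorem w_pos (S : RankOne) (n : ℕ) : 0 < S.w n := by
  induction n with
  | zero => simp only [S.w0, zero_lt_one]
  | succ n ih =>
    have hr : 0 < S.r n := zero_lt_two.trans_le (S.hr n)
    rw [S.wrec]
    positivity

/-- The height in `C (n + 1)` at which the `k`-th subcolumn of `C n` (counted from `0`) starts. -/
def subcolumnBase (S : RankOne) (n k : ℕ) : ℕ := ∑ i ∈ Finset.range k, (S.h n + S.s n i)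

theorem subcolumnBase_zero (S : RankOne) (n : ℕ) : S.subcolumnBase n 0 = 0 :=
  Finset.sum_range_zero _

theorem subcolumnBase_succ (S : RankOne) (n k : ℕ) :
    S.subcolumnBase n (k + 1) = S.subcolumnBase n k + (S.h n + S.s n k) :=
  Finset.sum_range_succ _ _

theorem subcolumnBase_add_lt (hj : j < S.h n) (hk : k < S.r n) :
    S.subcolumnBase n k + j < S.h (n + 1) :=
  calc S.subcolumnBase n k + j
      < S.subcolumnBase n (k + 1) := by rw [subcolumnBase_succ]; omega
    _ ≤ S.subcolumnBase n (S.r n) :=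
      Finset.sum_le_sum_of_subset (Finset.range_subset_range.2 hk)
    _ = S.h (n + 1) := (S.hrec n).symm

theorem lvl_subcolumnBase_add_subset (hj : j < S.h n) (hk : k < S.r n) :
    S.lvl (n + 1) (S.subcolumnBase n k + j) ⊆ S.lvl n j := by
  have hw := S.w_pos (n + 1)
  have hr : (S.r n : ℝ) ≠ 0 := by exact_mod_cast (k.zero_le.trans_lt hk).ne'
  have hcut : S.w n = S.r n * S.w (n + 1) := by rw [S.wrec, mul_div_cancel₀ _ hr]
  have hk_succ : (k : ℝ) + 1 ≤ S.r n := by exact_mod_cast hk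
  rw [lvl, lvl, subcolumnBase, S.stack n j hj k hk, hcut]
  apply Ioo_subset_Ioo
  · exact le_add_of_nonneg_right (by positivity)
  · linarith [mul_le_mul_of_nonneg_right hk_succ hw.le]

theorem iterate_T_of_mem_lvl (hm : j + m < S.h n) {x : ℝ} (hx : x ∈ S.lvl n j) :
    (⇑S.T)^[m] x = x + (S.pos n (j + m) - S.pos n j) := by
  induction m with
  | zero => simp
  | succ m ih =>
    have hmem : x + (S.pos n (j + m) - S.pos n j) ∈ S.lvl n (j + m) := by
      constructor <;> linarith [hx.1, hx.2]
    rw [Function.iterate_succ_apply', ih (by omega), S.Tmap n (j + m) hm _ hmem, ← add_assoc j]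
    ring

theorem lvl_subset_iterate_T_image (hm : j + m < S.h n) :
    S.lvl n (j + m) ⊆ (⇑S.T)^[m] '' S.lvl n j := by
  intro y hy
  have hx : y - (S.pos n (j + m) - S.pos n j) ∈ S.lvl n j := by
    constructor <;> linarith [hy.1, hy.2]
  exact ⟨_, hx, by rw [iterate_T_of_mem_lvl hm hx, sub_add_cancel]⟩

theorem lvl_subset_X (hj : j < S.h n) : S.lvl n j ⊆ S.X := by
  rw [S.hX]
  exact subset_iUnion_of_subset n (subset_iUnion₂_of_subset j hj subset_rfl)

theorem μ_lvl_pos (hj : j < S.h n) : 0 < S.μ (S.lvl n j) := by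
  rw [μ, Measure.restrict_eq_self _ (lvl_subset_X hj), lvl, Real.volume_Ioo, add_sub_cancel_left]
  exact ENNReal.ofReal_pos.2 (S.w_pos n)

/-- The heights of the levels of `C n` contained in `A`. -/
def heightsIn (S : RankOne) (A : Set ℝ) (n : ℕ) : Set ℕ := {j | j < S.h n ∧ S.lvl n j ⊆ A}

theorem subcolumnBase_add_mem_heightsIn (hj : j ∈ S.heightsIn A n) (hk : k < S.r n) :
    S.subcolumnBase n k + j ∈ S.heightsIn A (n + 1) :=
  ⟨subcolumnBase_add_lt hj.1 hk, (lvl_subcolumnBase_add_subset hj.1 hk).trans hj.2⟩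

theorem heightsIn_mono (S : RankOne) (A : Set ℝ) : Monotone (S.heightsIn A) := by
  refine monotone_nat_of_le_succ fun n j hj => ?_
  have hr : 0 < S.r n := zero_lt_two.trans_le (S.hr n)
  simpa only [subcolumnBase_zero, zero_add] using subcolumnBase_add_mem_heightsIn hj hr

theorem mem_heightsIn_lvl (hj : j < S.h n) (hN : n ≤ N) : j ∈ S.heightsIn (S.lvl n j) N :=
  S.heightsIn_mono _ hN ⟨hj, subset_rfl⟩

theorem μ_inter_iterate_T_image_pos (hA : j ∈ S.heightsIn A n)
    (hB : j + m ∈ S.heightsIn B n) : 0 < S.μ (B ∩ (⇑S.T)^[m] '' A) :=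
  calc 0 < S.μ (S.lvl n (j + m)) := μ_lvl_pos hB.1
    _ ≤ S.μ (B ∩ (⇑S.T)^[m] '' A) := measure_mono <|
      subset_inter hB.2 ((lvl_subset_iterate_T_image hB.1).trans (image_mono hA.2))

/-- The integers visible in `C n` from `A` to `B`: the signed height differences between a level of
`C n` contained in `B` and one contained in `A`. -/
def heightDiffs (S : RankOne) (A B : Set ℝ) (n : ℕ) : Set ℤ :=
  {δ | ∃ x ∈ S.heightsIn A n, ∃ y ∈ S.heightsIn B n, δ = y - x}

theorem neg_h_lt_of_mem_heightDiffs (hδ : δ ∈ S.heightDiffs A B n) : -(S.h n : ℤ) < δ := by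
  obtain ⟨x, ⟨hx, -⟩, y, -, rfl⟩ := hδ
  omega

theorem μ_inter_iterate_T_image_pos_of_mem_heightDiffs
    (hm : (m : ℤ) ∈ S.heightDiffs A B n) : 0 < S.μ (B ∩ (⇑S.T)^[m] '' A) := by
  obtain ⟨x, hx, y, hy, hxy⟩ := hm
  obtain rfl : y = x + m := by omega
  exact μ_inter_iterate_T_image_pos hx hy

theorem add_subcolumnBase_sub_mem_heightDiffs {l : ℕ} (hδ : δ ∈ S.heightDiffs A B n)
    (hk : k < S.r n) (hl : l < S.r n) :
    δ + (S.subcolumnBase n l - S.subcolumnBase n k) ∈ S.heightDiffs A B (n + 1) := by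
  obtain ⟨x, hx, y, hy, rfl⟩ := hδ
  refine ⟨_, subcolumnBase_add_mem_heightsIn hx hk, _, subcolumnBase_add_mem_heightsIn hy hl, ?_⟩
  push_cast
  ring

theorem add_h_add_s_mem_heightDiffs (hδ : δ ∈ S.heightDiffs A B n) (hk : k + 1 < S.r n) :
    δ + (S.h n + S.s n k) ∈ S.heightDiffs A B (n + 1) := by
  convert add_subcolumnBase_sub_mem_heightDiffs hδ (k.lt_succ_self.trans hk) hk using 2
  rw [subcolumnBase_succ]
  push_cast
  ring

theorem heightDiffs_mono (S : RankOne) (A B : Set ℝ) : Monotone (S.heightDiffs A B) :=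
  fun _ _ hmn _ ⟨x, hx, y, hy, hδ⟩ =>
    ⟨x, S.heightsIn_mono A hmn hx, y, S.heightsIn_mono B hmn hy, hδ⟩

theorem sub_mem_heightDiffs_lvl {p j' p' : ℕ} (hp : p < S.h j) (hp' : p' < S.h j') (hj : j ≤ N)
    (hj' : j' ≤ N) : (p' : ℤ) - p ∈ S.heightDiffs (S.lvl j p) (S.lvl j' p') N :=
  ⟨p, mem_heightsIn_lvl hp hj, p', mem_heightsIn_lvl hp' hj', rfl⟩

theorem exists_mem_heightDiffs_succ_natAbs_sub_lt (hk : k + 2 < S.r n)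
    (hs : S.s n (k + 1) = S.s n k + 1) (hδ : δ ∈ S.heightDiffs A B n)
    (hδ' : δ' ∈ S.heightDiffs A' B' n) (hne : δ ≠ δ') :
    ∃ ε ∈ S.heightDiffs A B (n + 1), ∃ ε' ∈ S.heightDiffs A' B' (n + 1),
      (ε - ε').natAbs < (δ - δ').natAbs := by
  have hk' : k + 1 < S.r n := by omega
  rcases hne.lt_or_gt with hlt | hgt
  · exact ⟨_, add_h_add_s_mem_heightDiffs hδ hk, _, add_h_add_s_mem_heightDiffs hδ' hk', by omega⟩
  · exact ⟨_, add_h_add_s_mem_heightDiffs hδ hk', _, add_h_add_s_mem_heightDiffs hδ' hk, by omega⟩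

theorem exists_common_mem_heightDiffs
    (hS : ∃ᶠ n in atTop, ∃ k, k + 2 < S.r n ∧ S.s n (k + 1) = S.s n k + 1)
    (hδ : δ ∈ S.heightDiffs A B N) (hδ' : δ' ∈ S.heightDiffs A' B' N) :
    ∃ n ε, ε ∈ S.heightDiffs A B n ∧ ε ∈ S.heightDiffs A' B' n := by
  induction hd : (δ - δ').natAbs using Nat.strong_induction_on generalizing N δ δ' with
  | h d ih =>
    rcases eq_or_ne δ δ' with rfl | hne
    · exact ⟨N, δ, hδ, hδ'⟩
    · obtain ⟨n, hNn, k, hk, hs⟩ := frequently_atTop.1 hS N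
      obtain ⟨ε, hε, ε', hε', hlt⟩ := exists_mem_heightDiffs_succ_natAbs_sub_lt hk hs
        (S.heightDiffs_mono A B hNn hδ) (S.heightDiffs_mono A' B' hNn hδ') hne
      exact ih _ (hd ▸ hlt) hε hε' rfl

theorem exists_pos_common_mem_heightDiffs
    (hS : ∃ᶠ n in atTop, ∃ k, k + 2 < S.r n ∧ S.s n (k + 1) = S.s n k + 1)
    (hδ : δ ∈ S.heightDiffs A B N) (hδ' : δ' ∈ S.heightDiffs A' B' N) :
    ∃ n m : ℕ, 0 < m ∧ (m : ℤ) ∈ S.heightDiffs A B n ∧ (m : ℤ) ∈ S.heightDiffs A' B' n := by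
  obtain ⟨n, ε, hε, hε'⟩ := exists_common_mem_heightDiffs hS hδ hδ'
  have hpos : 0 < ε + (S.h n + S.s n 0) := by
    have := neg_h_lt_of_mem_heightDiffs hε
    omega
  obtain ⟨m, hm⟩ := Int.eq_ofNat_of_zero_le hpos.le
  refine ⟨n + 1, m, by omega, ?_, ?_⟩
  · exact hm ▸ add_h_add_s_mem_heightDiffs hε (S.hr n)
  · exact hm ▸ add_h_add_s_mem_heightDiffs hε' (S.hr n)

theorem AlmostSteep.frequently_s_succ_eq (hS : S.AlmostSteep) :
    ∃ᶠ n in atTop, ∃ k, k + 2 < S.r n ∧ S.s n (k + 1) = S.s n k + 1 := by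
  refine Frequently.of_forall fun n => ⟨0, ?_⟩
  obtain ⟨hr, hs₀, hs₁, -⟩ := hS n
  exact ⟨hr, by rw [hs₀, hs₁]⟩

end RankOne

theorem statement15_general (S : RankOne)
    (hS : ∃ᶠ n in atTop, ∃ k, k + 2 < S.r n ∧ S.s n (k + 1) = S.s n k + 1)
    {a b a' b' p q p' q' : ℕ} (hp : p < S.h a) (hq : q < S.h b) (hp' : p' < S.h a')
    (hq' : q' < S.h b') :
    ∃ n : ℕ, 0 < n ∧ 0 < S.μ (S.lvl b q ∩ (⇑S.T)^[n] '' S.lvl a p) ∧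
      0 < S.μ (S.lvl b' q' ∩ (⇑S.T)^[n] '' S.lvl a' p') := by
  have hδ := RankOne.sub_mem_heightDiffs_lvl (N := a + b + a' + b') hp hq (by omega) (by omega)
  have hδ' := RankOne.sub_mem_heightDiffs_lvl (N := a + b + a' + b') hp' hq' (by omega) (by omega)
  obtain ⟨N, n, hn, hmem, hmem'⟩ := RankOne.exists_pos_common_mem_heightDiffs hS hδ hδ'
  exact ⟨n, hn, RankOne.μ_inter_iterate_T_image_pos_of_mem_heightDiffs hmem,
    RankOne.μ_inter_iterate_T_image_pos_of_mem_heightDiffs hmem'⟩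

/-- An almost steep rank-one transformation is doubly ergodic for levels:
for any levels `A` (of height `p` in `C j`) and `B` (of height `p'` in `C j'`) there is a
positive integer `n` with `μ(A ∩ TⁿA) > 0` and `μ(B ∩ TⁿA) > 0`. -/
theorem statement15 (S : RankOne) (hst : S.AlmostSteep)
    (j p : ℕ) (hp : p < S.h j) (j' p' : ℕ) (hp' : p' < S.h j') :
    ∃ n : ℕ, 0 < n ∧ 0 < S.μ (S.lvl j p ∩ (⇑S.T)^[n] '' S.lvl j p) ∧
      0 < S.μ (S.lvl j' p' ∩ (⇑S.T)^[n] '' S.lvl j p) :=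
  statement15_general S hst.frequently_s_succ_eq hp hp hp hp'
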